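/- Let (ψ_n)_{n≥0} be the orthonormal polynomials for the Akhiezer–Chebyshev weight w_α. Then for every n ≥ 1, ψ_n(e^{iα}) ≠ 0 and ψ_n*(e^{iα}) / ψ_n(e^{iα}) = (iβ·e^{iα/2} + 1) / (iβ·e^{−iα/2} + 1), where β = i·tan((π − α)/4); in particular this ratio is unimodular and independent of n. -/

import Mathlib

/-!
Write `s = sin (α / 2)`, `c = cos (α / 2)` and substitute `cos (θ / 2) = c cos τ` with `τ ∈ (0, π)`.
With `φ = θ / 2`, the measure `w_α(θ) dθ` becomes `s dτ / sin² φ` (`integral_arc`), where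
`sin² φ = 1 - c² cos² τ`, a weight of Bernstein-Szegő type.

The orthogonal polynomials are explicit. For `n ≥ 0` let `P_{n+1}` (`acPoly s n`) be given by
`P₁ = z - (1 - 2s)`, `P₂ = z² - (1 - 2s)(1 + s) z + s` and
`P_{n+2} = (z + 1) P_{n+1} - (1 - s²) z P_n` for `n ≥ 1`. After division by
`e^{i(n+1)φ}` the recurrence is that of the Chebyshev polynomials in `cos τ`, so that (`eval_acPolyC`)
`P_{n+1}(e^{2iφ}) = e^{i(n+1)φ} (A_n(τ) + 2i (1 - s) cⁿ cos(nτ) sin φ)`, where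
`A_n(τ) = c^{n+1} ((1 + s) cos((n+1)τ) - (1 - s) cos((n-1)τ))`.

Orthogonality of `P_{n+1}` to `1, z, …, zⁿ` is a statement about two families of moments. Those of
`cos(jτ) sin(mφ) / sin φ` vanish for `m ≤ j` because `sin(mφ) / sin φ` is a polynomial of degree
`m - 1` in `cos τ` (`sinMoment_eq`). Those of `cos(jτ) cos(mφ) / sin² φ` reduce to the previous
ones and to the case `m = 0`, where they form a geometric sequence of ratio `(1 - s) / (1 + s)`
(`cosMoment_ratio`); this comes from the value `∫ dτ / sin² φ = π / s` (`cosMoment_zero_zero`) and a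
three-term recurrence. `integral_real` combines the two families; the imaginary parts vanish by the
symmetry `τ ↦ π - τ`, which conjugates `z`.

Hence `P_n` is a nonzero real multiple of `ψ_n`, both having real coefficient in degree `n`. At
`τ = 0`, that is at `z = e^{iα}`, it equals `2 s c^{n-1} e^{inα/2} (c + i (1 - s))`, so it does not
vanish, and since `P*(z) = zⁿ conj(P(z))` on the unit circle the ratio is
`(c - i (1 - s)) / (c + i (1 - s))` for every `n ≥ 1`. This is the asserted value because
`tan((π - α) / 4) = (1 - s) / c`.
-/


open MeasureTheory Filter Set

/-- The Akhiezer-Chebyshev weight on the arc `(α, 2π - α)`. -/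
noncomputable def wAC (α θ : ℝ) : ℝ :=
  Real.sin (α / 2) /
    (2 * Real.sin (θ / 2) * Real.sqrt (Real.cos (α / 2) ^ 2 - Real.cos (θ / 2) ^ 2))

/-- The reversed polynomial `P*(z) = z^(deg P) ⬝ conj(P(1/conj z))`. -/
noncomputable def revPoly (P : Polynomial ℂ) : Polynomial ℂ :=
  (P.map (starRingEnd ℂ)).reverse

/-! ### The half-angle as a function of the uniformising parameter -/

/-- The half-angle `φ = θ / 2 ∈ (0, π)` with `cos φ = c cos τ`. -/
noncomputable def halfAngle (c τ : ℝ) : ℝ := Real.arccos (c * Real.cos τ)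

section
variable {c s : ℝ}

lemma abs_mul_cos_lt (hc : 0 < c) (hc1 : c < 1) (τ : ℝ) :
    -1 < c * Real.cos τ ∧ c * Real.cos τ < 1 := by
  have h1 := Real.cos_le_one τ
  have h2 := Real.neg_one_le_cos τ
  constructor <;> nlinarith

lemma cos_halfAngle (hc : 0 < c) (hc1 : c < 1) (τ : ℝ) :
    Real.cos (halfAngle c τ) = c * Real.cos τ :=
  Real.cos_arccos (abs_mul_cos_lt hc hc1 τ).1.le (abs_mul_cos_lt hc hc1 τ).2.le

lemma sin_halfAngle_pos (hc : 0 < c) (hc1 : c < 1) (τ : ℝ) :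
    0 < Real.sin (halfAngle c τ) := by
  obtain ⟨h1, h2⟩ := abs_mul_cos_lt hc hc1 τ
  rw [halfAngle, Real.sin_arccos]
  exact Real.sqrt_pos.2 (by nlinarith)

lemma continuous_halfAngle : Continuous (halfAngle c) := by
  unfold halfAngle; fun_prop

lemma sin_sq_halfAngle (hc : 0 < c) (hc1 : c < 1) (τ : ℝ) :
    Real.sin (halfAngle c τ) ^ 2 = 1 - c ^ 2 * Real.cos τ ^ 2 := by
  rw [Real.sin_sq, cos_halfAngle hc hc1]; ring

lemma halfAngle_pi_sub (τ : ℝ) : halfAngle c (Real.pi - τ) = Real.pi - halfAngle c τ := by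
  rw [halfAngle, Real.cos_pi_sub, mul_neg, Real.arccos_neg, halfAngle]

/-! ### Sine moments -/

lemma integral_cos_nat (j : ℕ) (hj : 0 < j) : ∫ τ in (0:ℝ)..Real.pi, Real.cos (j * τ) = 0 := by
  have : (j:ℝ) ≠ 0 := by positivity
  rw [intervalIntegral.integral_comp_mul_left (fun x => Real.cos x) this]
  simp [Real.sin_nat_mul_pi]

lemma continuous_sin_div (hc : 0 < c) (hc1 : c < 1) (j m : ℕ) :
    Continuous fun τ => Real.cos (j * τ) * Real.sin (m * halfAngle c τ) / Real.sin (halfAngle c τ) := by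
  have := continuous_halfAngle (c := c)
  exact Continuous.div (by fun_prop) (by fun_prop) fun τ => (sin_halfAngle_pos hc hc1 τ).ne'

/-- The moment `∫₀^π cos(jτ) sin(mφ) / sin φ dτ`, where `φ = halfAngle c τ`. -/
noncomputable def sinMoment (c : ℝ) (j m : ℕ) : ℝ :=
  ∫ τ in (0:ℝ)..Real.pi,
    Real.cos (j * τ) * Real.sin (m * halfAngle c τ) / Real.sin (halfAngle c τ)

/-- Product-to-sum formulas, applied to
`sin((m+2)φ) = 2 c cos τ sin((m+1)φ) - sin(mφ)`. -/
lemma sinMoment_rec (hc : 0 < c) (hc1 : c < 1) (j m : ℕ) :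
    sinMoment c (j + 1) (m + 2) =
      c * (sinMoment c (j + 2) (m + 1) + sinMoment c j (m + 1)) - sinMoment c (j + 1) m := by
  have hi (j m : ℕ) := (continuous_sin_div hc hc1 j m).intervalIntegrable (μ := volume) 0 Real.pi
  unfold sinMoment
  rw [← intervalIntegral.integral_add (hi _ _) (hi _ _), ← intervalIntegral.integral_const_mul,
    ← intervalIntegral.integral_sub (((hi _ _).add (hi _ _)).const_mul c) (hi _ _)]
  congr 1; ext τ
  have hs := (sin_halfAngle_pos hc hc1 τ).ne'
  have hcs := cos_halfAngle hc hc1 τ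
  set φ := halfAngle c τ
  have e1 : Real.sin (((m + 2 : ℕ):ℝ) * φ) = 2 * (c * Real.cos τ) * Real.sin (((m + 1 : ℕ):ℝ) * φ)
      - Real.sin (m * φ) := by
    rw [← hcs, show ((m + 2 : ℕ):ℝ) * φ = ((m + 1 : ℕ):ℝ) * φ + φ by push_cast; ring,
      show (m:ℝ) * φ = ((m + 1 : ℕ):ℝ) * φ - φ by push_cast; ring, Real.sin_add, Real.sin_sub]
    ring
  have e2 : Real.cos (((j + 2 : ℕ):ℝ) * τ) =
      2 * Real.cos τ * Real.cos (((j + 1 : ℕ):ℝ) * τ) - Real.cos (j * τ) := by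
    rw [show ((j + 2 : ℕ):ℝ) * τ = ((j + 1 : ℕ):ℝ) * τ + τ by push_cast; ring,
      show (j:ℝ) * τ = ((j + 1 : ℕ):ℝ) * τ - τ by push_cast; ring, Real.cos_add, Real.cos_sub]
    ring
  rw [e1, e2]
  field_simp
  ring

lemma sinMoment_zero (j : ℕ) : sinMoment c j 0 = 0 := by simp [sinMoment]

lemma sinMoment_one (hc : 0 < c) (hc1 : c < 1) (j : ℕ) :
    sinMoment c j 1 = ∫ τ in (0:ℝ)..Real.pi, Real.cos (j * τ) := by
  unfold sinMoment
  congr 1; ext τ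
  have hs := (sin_halfAngle_pos hc hc1 τ).ne'
  simp [hs]

/-- The quotient `sin(mφ) / sin φ` is a polynomial of degree `m - 1` in `cos τ`; this is its
orthogonality to `cos(jτ)` for `j ≥ m` and its leading Fourier coefficient. -/
lemma sinMoment_eq (hc : 0 < c) (hc1 : c < 1) (m : ℕ) :
    (∀ j, m ≤ j → sinMoment c j m = 0) ∧ sinMoment c m (m + 1) = Real.pi * c ^ m := by
  induction m using Nat.twoStepInduction with
  | zero => simp [sinMoment_zero, sinMoment_one hc hc1]
  | one =>
    have h : ∀ j, 1 ≤ j → sinMoment c j 1 = 0 := fun j hj => by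
      rw [sinMoment_one hc hc1, integral_cos_nat j hj]
    refine ⟨h, ?_⟩
    rw [sinMoment_rec hc hc1 0 0, h 2 (by norm_num), sinMoment_zero]
    simp [sinMoment_one hc hc1]; ring
  | more m h0 h1 =>
    have h : ∀ j, m + 2 ≤ j → sinMoment c j (m + 2) = 0 := fun j hj => by
      obtain ⟨i, rfl⟩ : ∃ i, j = i + 1 := ⟨j - 1, by omega⟩
      rw [sinMoment_rec hc hc1, h1.1 _ (by omega), h1.1 _ (by omega), h0.1 _ (by omega)]
      ring
    refine ⟨h, ?_⟩
    rw [sinMoment_rec hc hc1 (m + 1) (m + 1), h _ (by omega), h1.2, h1.1 _ (by omega)]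
    ring

/-! ### Cosine moments -/

/-- The moment `∫₀^π cos(jτ) cos(mφ) / sin² φ dτ`, where `φ = halfAngle c τ`. -/
noncomputable def cosMoment (c : ℝ) (j m : ℕ) : ℝ :=
  ∫ τ in (0:ℝ)..Real.pi,
    Real.cos (j * τ) * Real.cos (m * halfAngle c τ) / Real.sin (halfAngle c τ) ^ 2

lemma continuous_cos_div (hc : 0 < c) (hc1 : c < 1) (j m : ℕ) :
    Continuous fun τ =>
      Real.cos (j * τ) * Real.cos (m * halfAngle c τ) / Real.sin (halfAngle c τ) ^ 2 := by
  have := continuous_halfAngle (c := c)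
  exact Continuous.div (by fun_prop) (by fun_prop)
    fun τ => (pow_pos (sin_halfAngle_pos hc hc1 τ) 2).ne'

/-- With `κ = (1 - s) / (1 + s)`, the Poisson kernel expansion
`1 / sin² φ = s⁻¹ (1 + 2 ∑ κʲ cos(2jτ))` suggests the antiderivative
`s⁻¹ (τ + arctan (κ sin 2τ / (1 - κ cos 2τ)))`, which is smooth on the whole line. -/
lemma cosMoment_zero_zero (hs : 0 < s) (hs1 : s < 1) (hc : 0 < c) (hc1 : c < 1) (h : s ^ 2 + c ^ 2 = 1) :
    cosMoment c 0 0 = Real.pi / s := by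
  set κ := (1 - s) / (1 + s) with hκ
  have hκ0 : 0 < κ := div_pos (by linarith) (by linarith)
  have hκ1 : κ < 1 := by rw [hκ, div_lt_one (by linarith)]; linarith
  have hpos (τ : ℝ) : 0 < 1 - κ * Real.cos (2 * τ) := by
    nlinarith [Real.cos_le_one (2 * τ)]
  have hd (τ : ℝ) : HasDerivAt (fun τ => (1 / s) *
      (τ + Real.arctan (κ * Real.sin (2 * τ) / (1 - κ * Real.cos (2 * τ)))))
      (1 / Real.sin (halfAngle c τ) ^ 2) τ := by
    have h2 : HasDerivAt (fun τ : ℝ => 2 * τ) 2 τ := by simpa using (hasDerivAt_id τ).const_mul 2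
    have hsn := (h2.sin).const_mul κ
    have hcn := ((h2.cos).const_mul κ).const_sub 1
    refine (((hasDerivAt_id τ).add ((hsn.div hcn (hpos τ).ne').arctan)).const_mul (1 / s)).congr_deriv ?_
    rw [sin_sq_halfAngle hc hc1]
    have e : 1 - c ^ 2 * Real.cos τ ^ 2 ≠ 0 := by
      rw [← sin_sq_halfAngle hc hc1]; exact (pow_pos (sin_halfAngle_pos hc hc1 τ) 2).ne'
    have hp := (hpos τ).ne'
    have hq : Real.sin (2 * τ) ^ 2 = 1 - Real.cos (2 * τ) ^ 2 := Real.sin_sq _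
    have hx : 1 + (κ * Real.sin (2 * τ) / (1 - κ * Real.cos (2 * τ))) ^ 2 =
        (1 + κ ^ 2 - 2 * κ * Real.cos (2 * τ)) / (1 - κ * Real.cos (2 * τ)) ^ 2 := by
      field_simp; rw [hq]; ring
    have hy : 1 + κ ^ 2 - 2 * κ * Real.cos (2 * τ) =
        4 * (1 - c ^ 2 * Real.cos τ ^ 2) / (1 + s) ^ 2 := by
      rw [Real.cos_two_mul, hκ]
      have : 1 + s ≠ 0 := by linarith
      field_simp
      rw [show c ^ 2 = 1 - s ^ 2 by linarith]; ring
    rw [Pi.div_apply, hx, hy]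
    have : 1 + s ≠ 0 := by linarith
    have hz : κ * (Real.cos (2 * τ) * 2) * (1 - κ * Real.cos (2 * τ)) -
        κ * Real.sin (2 * τ) * -(κ * (-Real.sin (2 * τ) * 2)) = 2 * κ * (Real.cos (2 * τ) - κ) := by
      linear_combination (-2 * κ ^ 2) * hq
    rw [hz]
    have hw : 2 * κ * (Real.cos (2 * τ) - κ) = (1 - κ ^ 2) - (1 + κ ^ 2 - 2 * κ * Real.cos (2 * τ)) := by
      ring
    rw [hw, hy]
    have hv : 1 - κ ^ 2 = 4 * s / (1 + s) ^ 2 := by rw [hκ]; field_simp; ring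
    rw [hv]
    field_simp
    ring
  have hcont : Continuous fun τ => 1 / Real.sin (halfAngle c τ) ^ 2 := by
    simpa using continuous_cos_div hc hc1 0 0
  have := intervalIntegral.integral_eq_sub_of_hasDerivAt (fun x _ => hd x)
    (hcont.intervalIntegrable 0 Real.pi)
  simp only [cosMoment, Nat.cast_zero, zero_mul, Real.cos_zero, one_mul]
  rw [this]
  simp [Real.sin_two_pi, Real.cos_two_pi]
  ring

/-- Obtained by integrating `cos((j+2)τ)`, written as `cos((j+2)τ) (1 - c² cos² τ) / sin² φ`. -/
lemma cosMoment_rec (hc : 0 < c) (hc1 : c < 1) (j : ℕ) :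
    4 * (∫ τ in (0:ℝ)..Real.pi, Real.cos (((j + 2 : ℕ) : ℝ) * τ)) =
    (4 - 2 * c ^ 2) * cosMoment c (j + 2) 0 - c ^ 2 * (cosMoment c (j + 4) 0 + cosMoment c j 0) := by
  have hi (j m : ℕ) := (continuous_cos_div hc hc1 j m).intervalIntegrable (μ := volume) 0 Real.pi
  unfold cosMoment
  rw [← intervalIntegral.integral_add (hi _ _) (hi _ _), ← intervalIntegral.integral_const_mul,
    ← intervalIntegral.integral_const_mul, ← intervalIntegral.integral_const_mul,
    ← intervalIntegral.integral_sub ((hi _ _).const_mul _) (((hi _ _).add (hi _ _)).const_mul _)]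
  congr 1; ext τ
  have hs := (sin_halfAngle_pos hc hc1 τ).ne'
  have e2 : Real.cos (((j + 4 : ℕ):ℝ) * τ) =
      2 * (2 * Real.cos τ ^ 2 - 1) * Real.cos (((j + 2 : ℕ):ℝ) * τ) - Real.cos (j * τ) := by
    rw [show ((j + 4 : ℕ):ℝ) * τ = ((j + 2 : ℕ):ℝ) * τ + 2 * τ by push_cast; ring,
      show (j:ℝ) * τ = ((j + 2 : ℕ):ℝ) * τ - 2 * τ by push_cast; ring, Real.cos_add (_ * _), Real.cos_sub (_ * _),
      ← Real.cos_two_mul]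
    ring
  rw [e2]
  field_simp
  rw [sin_sq_halfAngle hc hc1]
  simp
  ring

/-- Symmetry under `τ ↦ π - τ`, which preserves `sin φ`. -/
lemma cosMoment_eq_zero_of_odd {j : ℕ}
    (hj : ∀ x : ℝ, Real.cos (j * (Real.pi - x)) = -Real.cos (j * x)) : cosMoment c j 0 = 0 := by
  have h := intervalIntegral.integral_comp_sub_left (a := 0) (b := Real.pi) (fun τ =>
    Real.cos (j * τ) * Real.cos ((0 : ℕ) * halfAngle c τ) / Real.sin (halfAngle c τ) ^ 2) Real.pi
  simp only [halfAngle_pi_sub, Real.sin_pi_sub, sub_self, sub_zero, hj, Nat.cast_zero, zero_mul,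
    neg_mul, neg_div, intervalIntegral.integral_neg] at h
  simp only [cosMoment, Nat.cast_zero, zero_mul]
  linarith

lemma cosMoment_one : cosMoment c 1 0 = 0 :=
  cosMoment_eq_zero_of_odd fun x => by simp [Real.cos_pi_sub]

lemma cosMoment_three : cosMoment c 3 0 = 0 :=
  cosMoment_eq_zero_of_odd fun x => by
    push_cast
    rw [Real.cos_three_mul, Real.cos_three_mul, Real.cos_pi_sub]; ring

lemma cosMoment_two (hs : 0 < s) (hs1 : s < 1) (hc : 0 < c) (hc1 : c < 1) (h : s ^ 2 + c ^ 2 = 1) :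
    (1 + s) * cosMoment c 2 0 = (1 - s) * cosMoment c 0 0 := by
  have hi (j m : ℕ) := (continuous_cos_div hc hc1 j m).intervalIntegrable (μ := volume) 0 Real.pi
  have key : 2 * (∫ τ in (0:ℝ)..Real.pi, (1:ℝ)) =
      (2 - c ^ 2) * cosMoment c 0 0 - c ^ 2 * cosMoment c 2 0 := by
    unfold cosMoment
    rw [← intervalIntegral.integral_const_mul,
      ← intervalIntegral.integral_const_mul, ← intervalIntegral.integral_const_mul,
      ← intervalIntegral.integral_sub ((hi _ _).const_mul _) ((hi _ _).const_mul _)]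
    congr 1; ext τ
    have hs := (sin_halfAngle_pos hc hc1 τ).ne'
    rw [show ((2 : ℕ) : ℝ) * τ = 2 * τ by norm_num, Real.cos_two_mul]
    field_simp
    rw [sin_sq_halfAngle hc hc1]
    simp
    ring
  have h0 := cosMoment_zero_zero hs hs1 hc hc1 h
  have h0' : s * cosMoment c 0 0 = Real.pi := by rw [h0]; field_simp
  simp at key
  have : (1 - s) * ((1 + s) * cosMoment c 2 0 - (1 - s) * cosMoment c 0 0) = 0 := by
    have : c ^ 2 = 1 - s ^ 2 := by linarith
    rw [this] at key
    linear_combination key + 2 * h0'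
  have := (mul_eq_zero.1 this).resolve_left (by linarith)
  linarith

/-- Among the geometric solutions of the three-term recurrence, the initial values select the
decaying one. -/
lemma cosMoment_ratio (hs : 0 < s) (hs1 : s < 1) (hc : 0 < c) (hc1 : c < 1) (h : s ^ 2 + c ^ 2 = 1)
    (j : ℕ) : (1 + s) * cosMoment c (j + 2) 0 = (1 - s) * cosMoment c j 0 := by
  have step (j : ℕ) (hj : (1 + s) * cosMoment c (j + 2) 0 = (1 - s) * cosMoment c j 0) :
      (1 + s) * cosMoment c (j + 4) 0 = (1 - s) * cosMoment c (j + 2) 0 := by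
    have r := cosMoment_rec hc hc1 j
    rw [integral_cos_nat _ (by omega), show c ^ 2 = 1 - s ^ 2 by linarith] at r
    have : (1 - s) * ((1 + s) * cosMoment c (j + 4) 0 - (1 - s) * cosMoment c (j + 2) 0) = 0 := by
      linear_combination r + (1 + s) * hj
    have := (mul_eq_zero.1 this).resolve_left (by linarith)
    linarith
  induction j using Nat.twoStepInduction with
  | zero => exact cosMoment_two hs hs1 hc hc1 h
  | one => simp [cosMoment_one, cosMoment_three]
  | more j h0 _ => exact step j h0

lemma cosMoment_add_two (hc : 0 < c) (hc1 : c < 1) (j m : ℕ) :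
    cosMoment c j (m + 2) = cosMoment c j m - 2 * sinMoment c j (m + 1) := by
  have hi (j m : ℕ) := (continuous_cos_div hc hc1 j m).intervalIntegrable (μ := volume) 0 Real.pi
  have hi' (j m : ℕ) := (continuous_sin_div hc hc1 j m).intervalIntegrable (μ := volume) 0 Real.pi
  unfold cosMoment sinMoment
  rw [← intervalIntegral.integral_const_mul,
    ← intervalIntegral.integral_sub (hi _ _) ((hi' _ _).const_mul _)]
  congr 1; ext τ
  have hs := (sin_halfAngle_pos hc hc1 τ).ne'
  set φ := halfAngle c τ
  have e1 : Real.cos (((m + 2 : ℕ):ℝ) * φ) =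
      Real.cos (m * φ) - 2 * Real.sin (((m + 1 : ℕ):ℝ) * φ) * Real.sin φ := by
    rw [show ((m + 2 : ℕ):ℝ) * φ = ((m + 1 : ℕ):ℝ) * φ + φ by push_cast; ring,
      show (m:ℝ) * φ = ((m + 1 : ℕ):ℝ) * φ - φ by push_cast; ring, Real.cos_add, Real.cos_sub]
    ring
  rw [e1]
  field_simp

lemma cosMoment_succ_one (hc : 0 < c) (hc1 : c < 1) (j : ℕ) :
    2 * cosMoment c (j + 1) 1 = c * (cosMoment c (j + 2) 0 + cosMoment c j 0) := by
  have hi (j m : ℕ) := (continuous_cos_div hc hc1 j m).intervalIntegrable (μ := volume) 0 Real.pi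
  unfold cosMoment
  rw [← intervalIntegral.integral_add (hi _ _) (hi _ _), ← intervalIntegral.integral_const_mul,
    ← intervalIntegral.integral_const_mul]
  congr 1; ext τ
  have hcs := cos_halfAngle hc hc1 τ
  have e2 : Real.cos (((j + 2 : ℕ):ℝ) * τ) =
      2 * Real.cos τ * Real.cos (((j + 1 : ℕ):ℝ) * τ) - Real.cos (j * τ) := by
    rw [show ((j + 2 : ℕ):ℝ) * τ = ((j + 1 : ℕ):ℝ) * τ + τ by push_cast; ring,
      show (j:ℝ) * τ = ((j + 1 : ℕ):ℝ) * τ - τ by push_cast; ring, Real.cos_add, Real.cos_sub]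
    ring
  rw [e2, Nat.cast_one, one_mul, hcs]
  simp
  ring

lemma cosMoment_zero_one (hc : 0 < c) (hc1 : c < 1) : cosMoment c 0 1 = 0 := by
  have : cosMoment c 0 1 = c * cosMoment c 1 0 := by
    unfold cosMoment
    rw [← intervalIntegral.integral_const_mul]
    congr 1; ext τ
    simp [cos_halfAngle hc hc1]
    ring
  rw [this, cosMoment_one, mul_zero]

/-- The combination of cosine moments attached to the even part of the polynomial of degree `N + 2`
vanishes below that degree. -/
lemma cosMoment_comb (hs : 0 < s) (hs1 : s < 1) (hc : 0 < c) (hc1 : c < 1)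
    (h : s ^ 2 + c ^ 2 = 1) (N m : ℕ) (hm : m < N + 2) :
    (1 + s) * cosMoment c (N + 2) m - (1 - s) * cosMoment c N m = 0 := by
  have h0 (j : ℕ) := cosMoment_ratio hs hs1 hc hc1 h j
  induction m using Nat.twoStepInduction with
  | zero => linarith [h0 N]
  | one =>
    rcases N with _ | N
    · have := cosMoment_succ_one hc hc1 1
      rw [cosMoment_one, cosMoment_three] at this
      rw [cosMoment_zero_one hc hc1, show cosMoment c (0 + 2) 1 = 0 by simpa using this]
      ring
    · have e1 := cosMoment_succ_one hc hc1 (N + 2)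
      have e2 := cosMoment_succ_one hc hc1 N
      linear_combination (1 + s) / 2 * e1 - (1 - s) / 2 * e2 + c / 2 * h0 (N + 2) + c / 2 * h0 N
  | more m ih _ =>
    rw [cosMoment_add_two hc hc1, cosMoment_add_two hc hc1,
      (sinMoment_eq hc hc1 (m + 1)).1 _ (by omega), (sinMoment_eq hc hc1 (m + 1)).1 _ (by omega)]
    linarith [ih (by omega)]

lemma cosMoment_comb_top (hs : 0 < s) (hs1 : s < 1) (hc : 0 < c) (hc1 : c < 1)
    (h : s ^ 2 + c ^ 2 = 1) (N : ℕ) :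
    (1 + s) * cosMoment c (N + 2) (N + 2) - (1 - s) * cosMoment c N (N + 2) =
      2 * (1 - s) * (Real.pi * c ^ N) := by
  rw [cosMoment_add_two hc hc1, cosMoment_add_two hc hc1,
    (sinMoment_eq hc hc1 (N + 1)).1 _ (by omega), (sinMoment_eq hc hc1 N).2]
  linarith [cosMoment_comb hs hs1 hc hc1 h N N (by omega)]

/-- The real part of `e^{-i(n+1)φ} P(e^{2iφ})`, where `P = acPoly s n` has degree `n + 1`. -/
noncomputable def evenPart (s c : ℝ) (n : ℕ) (τ : ℝ) : ℝ :=
  c ^ (n + 1) * ((1 + s) * Real.cos ((n + 1) * τ) - (1 - s) * Real.cos ((n - 1) * τ))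

/-- The real part of the orthogonality relation between `acPoly s n` and `z ^ k`, in terms of
`m = n + 1 - 2k`. -/
lemma integral_real (hs : 0 < s) (hs1 : s < 1) (hc : 0 < c) (hc1 : c < 1)
    (h : s ^ 2 + c ^ 2 = 1) (n : ℕ) (m : ℤ) (hm : -(n + 1 : ℤ) < m) (hm' : m ≤ n + 1) :
    ∫ τ in (0:ℝ)..Real.pi,
      (evenPart s c n τ * Real.cos (m * halfAngle c τ) -
        2 * (1 - s) * c ^ n * Real.cos (n * τ) * Real.sin (halfAngle c τ) *
          Real.sin (m * halfAngle c τ)) / Real.sin (halfAngle c τ) ^ 2 = 0 := by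
  have hi (j m : ℕ) := (continuous_cos_div hc hc1 j m).intervalIntegrable (μ := volume) 0 Real.pi
  have hi' (j m : ℕ) := (continuous_sin_div hc hc1 j m).intervalIntegrable (μ := volume) 0 Real.pi
  obtain ⟨j, hcosj, hj⟩ : ∃ j : ℕ, (∀ τ : ℝ, Real.cos (((n:ℝ) - 1) * τ) = Real.cos (j * τ)) ∧
      (j + 1 = n ∨ (n = 0 ∧ j = 1)) := by
    rcases n with _ | N
    · exact ⟨1, fun τ => by simp, by simp⟩
    · exact ⟨N, fun τ => by simp, by simp⟩
  -- the integral for `m = ± k`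
  have key (ε : ℝ) (k : ℕ) (hε : ∀ φ : ℝ, Real.cos (m * φ) = Real.cos (k * φ) ∧
      Real.sin (m * φ) = ε * Real.sin (k * φ)) :
      ∫ τ in (0:ℝ)..Real.pi,
      (evenPart s c n τ * Real.cos (m * halfAngle c τ) -
        2 * (1 - s) * c ^ n * Real.cos (n * τ) * Real.sin (halfAngle c τ) *
          Real.sin (m * halfAngle c τ)) / Real.sin (halfAngle c τ) ^ 2 =
      c ^ (n + 1) * ((1 + s) * cosMoment c (n + 1) k - (1 - s) * cosMoment c j k) -
        2 * (1 - s) * c ^ n * ε * sinMoment c n k := by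
    unfold cosMoment sinMoment
    rw [← intervalIntegral.integral_const_mul, ← intervalIntegral.integral_const_mul,
      ← intervalIntegral.integral_const_mul,
      ← intervalIntegral.integral_sub ((hi _ _).const_mul _) ((hi _ _).const_mul _),
      ← intervalIntegral.integral_const_mul,
      ← intervalIntegral.integral_sub
        ((((hi _ _).const_mul _).sub ((hi _ _).const_mul _)).const_mul _) ((hi' _ _).const_mul _)]
    congr 1; ext τ
    have hs := (sin_halfAngle_pos hc hc1 τ).ne'
    rw [(hε _).1, (hε _).2, evenPart, hcosj τ]
    push_cast
    field_simp
  have low (k : ℕ) (hk : k < n + 1) :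
      (1 + s) * cosMoment c (n + 1) k - (1 - s) * cosMoment c j k = 0 := by
    rcases n with _ | N
    · obtain rfl : k = 0 := by omega
      obtain rfl : j = 1 := by omega
      rw [cosMoment_one]; ring
    · obtain rfl : j = N := by omega
      exact cosMoment_comb hs hs1 hc hc1 h _ _ hk
  rcases lt_or_ge m 0 with hneg | hpos
  · rw [key (-1) m.natAbs fun φ => ?_, low _ (by omega),
      (sinMoment_eq hc hc1 _).1 _ (by omega)]
    · ring
    · have : (m : ℝ) = -(m.natAbs : ℝ) := by
        rw [Nat.cast_natAbs, abs_of_neg hneg]; simp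
      rw [this]; simp
  · obtain ⟨k, rfl⟩ := Int.eq_ofNat_of_zero_le hpos
    rw [key 1 k fun φ => by simp]
    rcases Nat.lt_or_ge k (n + 1) with hk | hk
    · rw [low _ hk, (sinMoment_eq hc hc1 _).1 _ (by omega)]; ring
    · obtain rfl : k = n + 1 := by omega
      rw [(sinMoment_eq hc hc1 n).2]
      rcases n with _ | N
      · obtain rfl : j = 1 := by omega
        have e1 := cosMoment_succ_one hc hc1 0
        have e2 := cosMoment_ratio hs hs1 hc hc1 h 0
        have e3 : s * cosMoment c 0 0 = Real.pi := by
          rw [cosMoment_zero_zero hs hs1 hc hc1 h]; field_simp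
        have : (1 + s) * (c * (2 * s * cosMoment c 1 1) - 2 * (1 - s) * Real.pi) = 0 := by
          simp only [zero_add] at e1 e2
          linear_combination (1 + s) * c * s * e1 + s * c ^ 2 * e2 + 2 * c ^ 2 * e3 + 2 * Real.pi * h
        have := (mul_eq_zero.1 this).resolve_left (by linarith)
        simp only [zero_add]
        linear_combination this
      · obtain rfl : j = N := by omega
        rw [cosMoment_comb_top hs hs1 hc hc1 h]
        ring

/-! ### The explicit orthogonal polynomials -/

open Polynomial in
/-- The orthogonal polynomial of degree `n + 1` for the weight `w_α`, where `s = sin (α / 2)`. The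
index is shifted because the recurrence holds only from degree one on. -/
noncomputable def acPoly (s : ℝ) : ℕ → ℝ[X]
  | 0 => X - C (1 - 2 * s)
  | 1 => X ^ 2 - C ((1 - 2 * s) * (1 + s)) * X + C s
  | n + 2 => (X + 1) * acPoly s (n + 1) - C (1 - s ^ 2) * X * acPoly s n

open Polynomial in
lemma natDegree_acPoly (s : ℝ) (n : ℕ) : (acPoly s n).natDegree ≤ n + 1 := by
  induction n using Nat.twoStepInduction with
  | zero => rw [acPoly]; compute_degree
  | one => rw [acPoly]; compute_degree
  | more n h0 h1 =>
    rw [acPoly]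
    refine (natDegree_sub_le _ _).trans (max_le ?_ ?_)
    · refine natDegree_mul_le.trans ?_
      have : (X + 1 : ℝ[X]).natDegree ≤ 1 := by compute_degree
      omega
    · refine natDegree_mul_le.trans ?_
      have : (C (1 - s ^ 2) * X : ℝ[X]).natDegree ≤ 1 := by compute_degree
      omega

open Polynomial in
/-- `acPoly` with complex coefficients. -/
noncomputable def acPolyC (s : ℝ) (n : ℕ) : ℂ[X] := (acPoly s n).map Complex.ofRealHom

open Polynomial in
/-- Closed form on the unit circle: after division by `e^{i(n+1)φ}`, both sides satisfy
`p_{n+2} = 2 c cos τ p_{n+1} - c² p_n`. -/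
lemma eval_acPolyC (h : s ^ 2 + c ^ 2 = 1) {τ φ : ℝ} (hφ : Real.cos φ = c * Real.cos τ) (n : ℕ) :
    (acPolyC s n).eval (Complex.exp (φ * Complex.I) ^ 2) =
      Complex.exp (φ * Complex.I) ^ (n + 1) * (evenPart s c n τ +
        (2 * (1 - s) * c ^ n * Real.cos (n * τ) * Real.sin φ : ℝ) * Complex.I) := by
  have hv : Complex.exp (φ * Complex.I) = (Real.cos φ : ℂ) + Real.sin φ * Complex.I := by
    rw [Complex.exp_mul_I]; simp
  have hsc : (Real.sin φ : ℂ) ^ 2 + (Real.cos φ : ℂ) ^ 2 = 1 := by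
    exact_mod_cast Real.sin_sq_add_cos_sq φ
  have hφ' : (Real.cos φ : ℂ) = c * Real.cos τ := by exact_mod_cast hφ
  have hC : (s:ℂ) ^ 2 + (c:ℂ) ^ 2 = 1 := by exact_mod_cast h
  set v := Complex.exp (φ * Complex.I)
  set w := (Real.cos φ : ℂ) - Real.sin φ * Complex.I with hw
  have hI := Complex.I_sq
  have hvw : v * w = 1 := by
    rw [hv, hw]; linear_combination hsc - (Real.sin φ : ℂ) ^ 2 * hI
  induction n using Nat.twoStepInduction with
  | zero =>
    simp [acPolyC, acPoly, evenPart]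
    simp at hφ' hv hw
    have : v * w = 1 := hvw
    linear_combination v * hv + (1 - 2 * (s:ℂ)) * hvw - (1 - 2 * (s:ℂ)) * v * hw + 2 * s * v * hφ'
  | one =>
    simp [acPolyC, acPoly, evenPart]
    rw [one_add_one_eq_two, Complex.cos_two_mul]
    simp at hφ' hv hw
    have h1 : (c:ℂ) * Complex.cos τ = (v + w) / 2 := by rw [← hφ', hv, hw]; ring
    have h2 : Complex.sin φ * Complex.I = (v - w) / 2 := by rw [hv, hw]; ring
    have h3 : (c:ℂ) ^ 2 = 1 - s ^ 2 := by linear_combination hC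
    have h4 : v ^ 2 * ((c:ℂ) ^ 2 * ((1 + s) * (2 * Complex.cos τ ^ 2 - 1) - (1 - s)) +
        2 * (1 - s) * c * Complex.cos τ * Complex.sin φ * Complex.I) =
        v ^ 2 * ((1 + s) * (2 * (c * Complex.cos τ) ^ 2 - c ^ 2) - c ^ 2 * (1 - s) +
          2 * (1 - s) * (c * Complex.cos τ) * (Complex.sin φ * Complex.I)) := by ring
    rw [h4, h1, h2, h3]
    linear_combination (-(s : ℂ) * (v * w + 1) - (1 + s) * v ^ 2) * hvw
  | more n h0 h1 =>
    have e : (acPolyC s (n + 2)) = (X + 1) * acPolyC s (n + 1)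
        - C ((1 - s ^ 2 : ℝ) : ℂ) * X * acPolyC s n := by
      simp [acPolyC, acPoly]
    rw [e]
    simp only [eval_sub, eval_mul, eval_add, eval_X, eval_one, eval_C, h0, h1]
    have hvv : v ^ 2 + 1 = 2 * (c * Real.cos τ) * v := by
      rw [← hφ']; linear_combination v * hv - hvw + v * hw
    have r (x : ℝ) : Real.cos (x + τ) = 2 * Real.cos τ * Real.cos x - Real.cos (x - τ) := by
      rw [Real.cos_add, Real.cos_sub]; ring
    have r1 := r ((n + 2) * τ)
    have r2 := r (n * τ)
    have r3 := r ((n + 1) * τ)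
    have f1 : evenPart s c (n + 2) τ = 2 * (c * Real.cos τ) * evenPart s c (n + 1) τ
        - c ^ 2 * evenPart s c n τ := by
      unfold evenPart
      push_cast
      ring_nf at r1 r2 r3 ⊢
      rw [r1, r2]
      ring
    have f2 : Real.cos (((n + 2 : ℕ):ℝ) * τ) = 2 * Real.cos τ * Real.cos (((n + 1 : ℕ):ℝ) * τ)
        - Real.cos (n * τ) := by
      push_cast
      ring_nf at r3 ⊢
      rw [r3]
    rw [hvv, f1, f2, show 1 - s ^ 2 = c ^ 2 by linarith]
    push_cast
    ring

/-! ### The inner product in the uniformising parameter -/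

/-- The point `e^{iθ} = e^{2iφ}` of the arc, where `φ = halfAngle c τ`. -/
noncomputable def arcPoint (c τ : ℝ) : ℂ := Complex.exp (halfAngle c τ * Complex.I) ^ 2

lemma continuous_arcPoint : Continuous (arcPoint c) := by
  have := continuous_halfAngle (c := c)
  unfold arcPoint; fun_prop

lemma arcPoint_pi_sub (τ : ℝ) :
    arcPoint c (Real.pi - τ) = (starRingEnd ℂ) (arcPoint c τ) := by
  rw [arcPoint, halfAngle_pi_sub, arcPoint, map_pow, ← Complex.exp_conj]
  simp [sub_mul, Complex.exp_sub]
  rw [div_pow]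
  simp [← inv_pow, ← Complex.exp_neg]

open Polynomial in
/-- The inner product of the weight `w_α` in the variable `τ`, without the factor
`sin (α / 2) / (2π)`. -/
noncomputable def arcInner (c : ℝ) (p q : ℂ[X]) : ℂ :=
  ∫ τ in (0:ℝ)..Real.pi, p.eval (arcPoint c τ) * (starRingEnd ℂ) (q.eval (arcPoint c τ)) *
    ((1 / Real.sin (halfAngle c τ) ^ 2 : ℝ) : ℂ)

open Polynomial in
lemma continuous_arcInner (hc : 0 < c) (hc1 : c < 1) (p q : ℂ[X]) :
    Continuous fun τ => p.eval (arcPoint c τ) * (starRingEnd ℂ) (q.eval (arcPoint c τ)) *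
    ((1 / Real.sin (halfAngle c τ) ^ 2 : ℝ) : ℂ) := by
  have h1 := continuous_arcPoint (c := c)
  have h2 : Continuous fun τ => 1 / Real.sin (halfAngle c τ) ^ 2 := by
    simpa using continuous_cos_div hc hc1 0 0
  have h3 (p : ℂ[X]) : Continuous fun τ => p.eval (arcPoint c τ) := p.continuous.comp h1
  exact ((h3 p).mul (Complex.continuous_conj.comp (h3 q))).mul (Complex.continuous_ofReal.comp h2)

open Polynomial in
lemma arcInner_sum_left (hc : 0 < c) (hc1 : c < 1) {ι : Type} (t : Finset ι) (a : ι → ℂ)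
    (p : ι → ℂ[X]) (q : ℂ[X]) :
    arcInner c (∑ i ∈ t, C (a i) * p i) q = ∑ i ∈ t, a i * arcInner c (p i) q := by
  unfold arcInner
  simp_rw [← intervalIntegral.integral_const_mul]
  rw [← intervalIntegral.integral_finsetSum fun i _ =>
    ((continuous_arcInner hc hc1 (p i) q).intervalIntegrable _ _).const_mul _]
  congr 1; ext τ
  simp [eval_finsetSum, Finset.sum_mul, mul_assoc]

open Polynomial in
lemma arcInner_sum_right (hc : 0 < c) (hc1 : c < 1) {ι : Type} (t : Finset ι) (a : ι → ℂ)
    (p : ι → ℂ[X]) (q : ℂ[X]) :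
    arcInner c q (∑ i ∈ t, C (a i) * p i) =
      ∑ i ∈ t, (starRingEnd ℂ) (a i) * arcInner c q (p i) := by
  unfold arcInner
  simp_rw [← intervalIntegral.integral_const_mul]
  rw [← intervalIntegral.integral_finsetSum fun i _ =>
    ((continuous_arcInner hc hc1 q (p i)).intervalIntegrable _ _).const_mul _]
  congr 1; ext τ
  simp [eval_finsetSum, Finset.sum_mul, Finset.mul_sum]
  refine Finset.sum_congr rfl fun i _ => by ring

open Polynomial in
lemma arcInner_acPolyC_pow (hs : 0 < s) (hs1 : s < 1) (hc : 0 < c) (hc1 : c < 1)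
    (h : s ^ 2 + c ^ 2 = 1) (n k : ℕ) (hk : k ≤ n) :
    arcInner c (acPolyC s n) (X ^ k) = 0 := by
  set f : ℝ → ℂ := fun τ => (acPolyC s n).eval (arcPoint c τ) *
    (starRingEnd ℂ) ((X ^ k : ℂ[X]).eval (arcPoint c τ)) *
    ((1 / Real.sin (halfAngle c τ) ^ 2 : ℝ) : ℂ) with hf
  have hfi : IntervalIntegrable f volume 0 Real.pi :=
    (continuous_arcInner hc hc1 (acPolyC s n) (X ^ k)).intervalIntegrable _ _
  have hconj (z : ℂ) : (acPolyC s n).eval ((starRingEnd ℂ) z) =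
      (starRingEnd ℂ) ((acPolyC s n).eval z) := by
    rw [acPolyC, eval_map, eval_map, hom_eval₂]
    congr 1
    ext x; simp
  have hsym (τ : ℝ) : f (Real.pi - τ) = (starRingEnd ℂ) (f τ) := by
    simp only [hf, arcPoint_pi_sub, hconj, halfAngle_pi_sub, Real.sin_pi_sub, eval_pow, eval_X,
      map_mul, map_pow, Complex.conj_ofReal]
  have hE : arcInner c (acPolyC s n) (X ^ k) = ∫ τ in (0:ℝ)..Real.pi, f τ := rfl
  have h1 : (starRingEnd ℂ) (∫ τ in (0:ℝ)..Real.pi, f τ) = ∫ τ in (0:ℝ)..Real.pi, f τ := by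
    rw [← intervalIntegral.intervalIntegral_conj]
    simp_rw [← hsym]
    simp
  have him : (∫ τ in (0:ℝ)..Real.pi, f τ).im = 0 := Complex.conj_eq_iff_im.1 h1
  have hre : (∫ τ in (0:ℝ)..Real.pi, f τ).re = 0 := by
    have e : (∫ τ in (0:ℝ)..Real.pi, f τ).re = ∫ τ in (0:ℝ)..Real.pi, (f τ).re := by
      have := Complex.reCLM.intervalIntegral_comp_comm hfi
      simpa using this.symm
    refine e.trans (Eq.trans ?_
      (integral_real hs hs1 hc hc1 h n (n + 1 - 2 * k) (by omega) (by omega)))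
    congr 1; ext τ
    simp only [hf, arcPoint, eval_pow, eval_X, eval_acPolyC h (cos_halfAngle hc hc1 τ) n]
    set φ := halfAngle c τ
    have hv : Complex.exp (φ * Complex.I) ^ (n + 1) *
        (starRingEnd ℂ) ((Complex.exp (φ * Complex.I) ^ 2) ^ k) =
        (Real.cos ((n + 1 - 2 * k : ℤ) * φ) : ℂ) +
          Real.sin ((n + 1 - 2 * k : ℤ) * φ) * Complex.I := by
      rw [map_pow, map_pow, ← Complex.exp_conj, ← pow_mul, ← Complex.exp_nat_mul,
        ← Complex.exp_nat_mul, ← Complex.exp_add, Complex.ofReal_cos, Complex.ofReal_sin,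
        ← Complex.exp_mul_I]
      congr 1
      simp
      ring
    rw [mul_right_comm (Complex.exp _ ^ _), hv]
    simp only [Complex.mul_re, Complex.add_re, Complex.add_im,
      Complex.ofReal_re, Complex.ofReal_im, Complex.mul_im, Complex.I_re, Complex.I_im]
    push_cast
    ring
  rw [hE]
  exact Complex.ext hre him

open Polynomial in
lemma arcInner_acPolyC_of_natDegree_le (hs : 0 < s) (hs1 : s < 1) (hc : 0 < c) (hc1 : c < 1)
    (h : s ^ 2 + c ^ 2 = 1) (n : ℕ) (q : ℂ[X]) (hq : q.natDegree ≤ n) :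
    arcInner c (acPolyC s n) q = 0 := by
  rw [q.as_sum_range_C_mul_X_pow, arcInner_sum_right hc hc1]
  refine Finset.sum_eq_zero fun k hk => ?_
  rw [Finset.mem_range] at hk
  rw [arcInner_acPolyC_pow hs hs1 hc hc1 h n k (by omega), mul_zero]

open Polynomial in
lemma exists_sum_of_natDegree_le {ψ : ℕ → ℂ[X]} (hdeg : ∀ n : ℕ, (ψ n).degree = n) (N : ℕ)
    (p : ℂ[X]) (hp : p.degree < N) : ∃ a : ℕ → ℂ, p = ∑ j ∈ Finset.range N, C (a j) * ψ j := by
  induction N generalizing p with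
  | zero =>
    refine ⟨0, ?_⟩
    simpa [Nat.WithBot.lt_zero_iff] using hp
  | succ N ih =>
    have hl : (ψ N).coeff N ≠ 0 := by
      have := coeff_ne_zero_of_eq_degree (hdeg N); exact this
    obtain ⟨a, ha⟩ := ih (p - C (p.coeff N / (ψ N).coeff N) * ψ N) (by
      rw [degree_lt_iff_coeff_zero]
      intro m hm
      rcases hm.eq_or_lt with rfl | hm
      · simp [hl]
      · have h1 : p.coeff m = 0 := coeff_eq_zero_of_degree_lt (hp.trans_le (by exact_mod_cast hm))
        have h2 : (ψ N).coeff m = 0 :=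
          coeff_eq_zero_of_degree_lt ((hdeg N).trans_lt (by exact_mod_cast hm))
        simp [h1, h2])
    refine ⟨Function.update a N (p.coeff N / (ψ N).coeff N), ?_⟩
    rw [Finset.sum_range_succ, Function.update_self]
    rw [Finset.sum_congr rfl (g := fun j => C (a j) * ψ j) fun j hj => by
      rw [Function.update_of_ne (Finset.mem_range.1 hj).ne], ← ha]
    ring

/-- The change of variables `cos (θ / 2) = cos (α / 2) cos τ`. No integrability assumption on `F` is
needed, since the substitution formula for injective maps holds for arbitrary functions. -/
lemma integral_arc {α : ℝ} (hα : α ∈ Set.Ioo 0 Real.pi) (F : ℂ → ℂ) :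
    ∫ θ in Set.Ioo α (2 * Real.pi - α), F (Complex.exp (θ * Complex.I)) * ((wAC α θ : ℝ) : ℂ) =
      Real.sin (α / 2) * ∫ τ in (0:ℝ)..Real.pi, F (arcPoint (Real.cos (α / 2)) τ) *
        ((1 / Real.sin (halfAngle (Real.cos (α / 2)) τ) ^ 2 : ℝ) : ℂ) := by
  obtain ⟨h0, h1⟩ := hα
  set c := Real.cos (α / 2) with hcdef
  set s := Real.sin (α / 2) with hsdef
  have hs : 0 < s := Real.sin_pos_of_pos_of_lt_pi (by linarith) (by linarith)
  have hc : 0 < c := Real.cos_pos_of_mem_Ioo ⟨by linarith, by linarith⟩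
  have h : s ^ 2 + c ^ 2 = 1 := Real.sin_sq_add_cos_sq _
  have hc1 : c < 1 := by nlinarith
  have hmem (τ : ℝ) : halfAngle c τ ∈ Set.Icc 0 Real.pi :=
    ⟨Real.arccos_nonneg _, Real.arccos_le_pi _⟩
  have himg : (fun τ => 2 * halfAngle c τ) '' Set.Ioo 0 Real.pi =
      Set.Ioo α (2 * Real.pi - α) := by
    have hαa : Real.arccos c = α / 2 := Real.arccos_cos (by linarith) (by linarith)
    have hαb : Real.arccos (-c) = Real.pi - α / 2 := by rw [Real.arccos_neg, hαa]
    ext θ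
    constructor
    · rintro ⟨τ, ⟨ht0, ht1⟩, rfl⟩
      have a1 : Real.cos τ < 1 := by
        rw [← Real.cos_zero]
        exact Real.cos_lt_cos_of_nonneg_of_le_pi le_rfl ht1.le ht0
      have a2 : -1 < Real.cos τ := by
        rw [← Real.cos_pi]
        exact Real.cos_lt_cos_of_nonneg_of_le_pi ht0.le le_rfl ht1
      have b1 : Real.arccos c < halfAngle c τ :=
        Real.arccos_lt_arccos (by nlinarith) (by nlinarith) hc1.le
      have b2 : halfAngle c τ < Real.arccos (-c) :=
        Real.arccos_lt_arccos (by linarith) (by nlinarith) (by nlinarith)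
      constructor <;> simp only <;> linarith
    · rintro ⟨ht0, ht1⟩
      have b1 : Real.cos (θ / 2) < c :=
        Real.cos_lt_cos_of_nonneg_of_le_pi (by linarith) (by linarith) (by linarith)
      have b2 : -c < Real.cos (θ / 2) := by
        rw [hcdef, ← Real.cos_pi_sub]
        exact Real.cos_lt_cos_of_nonneg_of_le_pi (by linarith) (by linarith) (by linarith)
      have d1 : Real.cos (θ / 2) / c < 1 := by rw [div_lt_one hc]; exact b1
      have d2 : -1 < Real.cos (θ / 2) / c := by rw [lt_div_iff₀ hc]; linarith
      refine ⟨Real.arccos (Real.cos (θ / 2) / c), ⟨Real.arccos_pos.2 d1, ?_⟩, ?_⟩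
      · refine lt_of_le_of_ne (Real.arccos_le_pi _) fun e => ?_
        rw [Real.arccos_eq_pi] at e; linarith
      · simp only [halfAngle]
        rw [Real.cos_arccos d2.le d1.le, mul_div_cancel₀ _ hc.ne',
          Real.arccos_cos (by linarith) (by linarith)]
        ring
  have hinj : Set.InjOn (fun τ => 2 * halfAngle c τ) (Set.Ioo 0 Real.pi) := by
    intro x hx y hy hxy
    have e : halfAngle c x = halfAngle c y := by simpa using hxy
    have e2 : Real.cos x = Real.cos y := by
      have := congrArg Real.cos e
      rw [cos_halfAngle hc hc1, cos_halfAngle hc hc1] at this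
      exact mul_left_cancel₀ hc.ne' this
    exact Real.injOn_cos ⟨hx.1.le, hx.2.le⟩ ⟨hy.1.le, hy.2.le⟩ e2
  have hd (τ : ℝ) : HasDerivAt (fun τ => 2 * halfAngle c τ)
      (2 * c * Real.sin τ / Real.sin (halfAngle c τ)) τ := by
    obtain ⟨e1, e2⟩ := abs_mul_cos_lt hc hc1 τ
    have := ((Real.hasDerivAt_arccos e1.ne' e2.ne).comp τ
      ((Real.hasDerivAt_cos τ).const_mul c)).const_mul 2
    refine this.congr_deriv ?_
    rw [halfAngle, Real.sin_arccos]
    ring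
  rw [← himg, integral_image_eq_integral_abs_deriv_smul measurableSet_Ioo
    (fun x _ => (hd x).hasDerivWithinAt) hinj, intervalIntegral.integral_of_le Real.pi_pos.le,
    integral_Ioc_eq_integral_Ioo, ← integral_const_mul]
  refine setIntegral_congr_fun measurableSet_Ioo fun τ hτ => ?_
  have hsin : 0 < Real.sin τ := Real.sin_pos_of_mem_Ioo hτ
  have hy := sin_halfAngle_pos hc hc1 τ
  have hz : Complex.exp (((2 * halfAngle c τ : ℝ) : ℂ) * Complex.I) = arcPoint c τ := by
    rw [arcPoint, ← Complex.exp_nat_mul]; congr 1; push_cast; ring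
  have hw : |2 * c * Real.sin τ / Real.sin (halfAngle c τ)| * wAC α (2 * halfAngle c τ) =
      s * (1 / Real.sin (halfAngle c τ) ^ 2) := by
    rw [abs_of_pos (by positivity), wAC, mul_div_cancel_left₀ _ (two_ne_zero), ← hcdef, ← hsdef,
      cos_halfAngle hc hc1,
      show c ^ 2 - (c * Real.cos τ) ^ 2 = (c * Real.sin τ) ^ 2 by
        rw [mul_pow, mul_pow, Real.sin_sq]; ring, Real.sqrt_sq (by positivity)]
    field_simp
  rw [hz, Complex.real_smul, mul_left_comm, ← Complex.ofReal_mul, hw]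
  push_cast
  ring

end

/-! ### The ratio at the endpoint of the arc -/

theorem stmt12 (α : ℝ) (hα : α ∈ Set.Ioo 0 Real.pi)
    (β : ℂ) (hβ : β = Complex.I * Real.tan ((Real.pi - α) / 4))
    (ψ : ℕ → Polynomial ℂ)
    (hdeg : ∀ n : ℕ, (ψ n).degree = n)
    (hlead : ∀ n : ℕ, 0 < (ψ n).leadingCoeff.re ∧ (ψ n).leadingCoeff.im = 0)
    (horth : ∀ n m : ℕ,
      ((1 / (2 * Real.pi) : ℝ) : ℂ) *
        ∫ θ in Set.Ioo α (2 * Real.pi - α),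
          (ψ n).eval (Complex.exp (θ * Complex.I)) *
            (starRingEnd ℂ) ((ψ m).eval (Complex.exp (θ * Complex.I))) * ((wAC α θ : ℝ) : ℂ)
        = if n = m then 1 else 0)
    (n : ℕ) (hn : 1 ≤ n) :
    (ψ n).eval (Complex.exp (α * Complex.I)) ≠ 0 ∧
    (revPoly (ψ n)).eval (Complex.exp (α * Complex.I)) /
        (ψ n).eval (Complex.exp (α * Complex.I)) =
      (Complex.I * β * Complex.exp ((α / 2 : ℝ) * Complex.I) + 1) /
        (Complex.I * β * Complex.exp ((-(α / 2) : ℝ) * Complex.I) + 1) := by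
  obtain ⟨h0, h1⟩ := hα
  set c := Real.cos (α / 2) with hcdef
  set s := Real.sin (α / 2) with hsdef
  have hs : 0 < s := Real.sin_pos_of_pos_of_lt_pi (by linarith) (by linarith)
  have hc : 0 < c := Real.cos_pos_of_mem_Ioo ⟨by linarith, by linarith⟩
  have h : s ^ 2 + c ^ 2 = 1 := Real.sin_sq_add_cos_sq _
  have hc1 : c < 1 := by nlinarith
  have hs1 : s < 1 := by nlinarith
  -- orthonormality in the variable `τ`
  have horth' (i j : ℕ) : ((1 / (2 * Real.pi) : ℝ) : ℂ) * (s * arcInner c (ψ i) (ψ j)) =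
      if i = j then 1 else 0 := by
    rw [← horth i j, integral_arc ⟨h0, h1⟩ fun z => (ψ i).eval z * (starRingEnd ℂ) ((ψ j).eval z)]
    rfl
  obtain ⟨N, rfl⟩ : ∃ N, n = N + 1 := ⟨n - 1, by omega⟩
  -- the explicit polynomial is a multiple of `ψ (N + 1)`
  obtain ⟨a, ha⟩ := exists_sum_of_natDegree_le hdeg (N + 2) (acPolyC s N) (by
    have : (acPolyC s N).natDegree ≤ N + 1 :=
      Polynomial.natDegree_map_le.trans (natDegree_acPoly s N)
    exact (Polynomial.natDegree_le_iff_degree_le.1 this).trans_lt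
      (by exact_mod_cast Nat.lt_succ_self _))
  -- pairing the expansion with `ψ i`, which has degree at most `N`, kills all lower terms
  have hzero (i : ℕ) (hi : i ≤ N) : a i = 0 := by
    have e := arcInner_acPolyC_of_natDegree_le hs hs1 hc hc1 h N (ψ i)
      (by rw [Polynomial.natDegree_eq_of_degree_eq_some (hdeg i)]; exact hi)
    rw [ha, arcInner_sum_left hc hc1] at e
    have e2 : ∑ j ∈ Finset.range (N + 2), a j * (if j = i then (1 : ℂ) else 0) = 0 := by
      simp_rw [← horth']
      rw [Finset.sum_congr rfl (g := fun j => ((1 / (2 * Real.pi) : ℝ) : ℂ) * s *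
        (a j * arcInner c (ψ j) (ψ i))) fun j _ => by ring, ← Finset.mul_sum, e, mul_zero]
    simpa [show i < N + 2 by omega] using e2
  have hP : acPolyC s N = Polynomial.C (a (N + 1)) * ψ (N + 1) := by
    rw [ha, Finset.sum_range_succ, Finset.sum_eq_zero, zero_add]
    intro i hi
    rw [hzero i (by have := Finset.mem_range.1 hi; omega)]
    simp
  set κ := a (N + 1) with hκ
  have hnat : (ψ (N + 1)).natDegree = N + 1 := Polynomial.natDegree_eq_of_degree_eq_some (hdeg _)
  -- the factor is real, both polynomials having real coefficient in degree `N + 1`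
  have hκr : (starRingEnd ℂ) κ = κ := by
    have e := congrArg (fun p => Polynomial.coeff p (N + 1)) hP
    obtain ⟨l1, l2⟩ := hlead (N + 1)
    rw [Polynomial.leadingCoeff, hnat] at l1 l2
    simp only [acPolyC, Polynomial.coeff_map, Polynomial.coeff_C_mul] at e
    have l3 : (ψ (N + 1)).coeff (N + 1) ≠ 0 := fun l => by simp [l] at l1
    have e2 := congrArg (starRingEnd ℂ) e
    rw [map_mul, Complex.conj_eq_iff_im.2 l2] at e2
    simp only [Complex.ofRealHom_eq_coe, Complex.conj_ofReal] at e e2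
    exact mul_right_cancel₀ l3 (e2.symm.trans e)
  set v := Complex.exp ((α / 2 : ℝ) * Complex.I) with hv
  have hv2 : Complex.exp (α * Complex.I) = v ^ 2 := by
    rw [hv, ← Complex.exp_nat_mul]; congr 1; push_cast; ring
  have hvc : (starRingEnd ℂ) v = Complex.exp ((-(α / 2) : ℝ) * Complex.I) := by
    rw [hv, ← Complex.exp_conj, map_mul, Complex.conj_ofReal, Complex.conj_I]; push_cast; ring_nf
  have hvv : v * (starRingEnd ℂ) v = 1 := by
    rw [hvc, hv, ← Complex.exp_add]; simp
  have hvre : v = c + s * Complex.I := by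
    rw [hv, Complex.exp_mul_I, ← Complex.ofReal_cos, ← Complex.ofReal_sin]
  have hv0 : v ≠ 0 := Complex.exp_ne_zero _
  -- up to a real factor and a power of `v`, the value of `ψ (N + 1)` at the endpoint
  set w : ℂ := c + (1 - s) * Complex.I with hw
  have hw0 : w ≠ 0 := fun e => by
    have := congrArg Complex.re e
    simp [hw] at this
    exact hc.ne' this
  have hcC : (c : ℂ) ≠ 0 := by exact_mod_cast hc.ne'
  have hsC : (s : ℂ) ≠ 0 := by exact_mod_cast hs.ne'
  have heval : κ * (ψ (N + 1)).eval (v ^ 2) = v ^ (N + 1) * (2 * s * c ^ N * w) := by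
    have e := eval_acPolyC h (τ := 0) (φ := α / 2) (by simp [← hcdef]) N
    rw [hP, Polynomial.eval_mul, Polynomial.eval_C] at e
    rw [e, evenPart, ← hsdef, hw, ← hv]
    simp only [mul_zero, Real.cos_zero]
    push_cast
    ring
  have hne : κ * (ψ (N + 1)).eval (v ^ 2) ≠ 0 := by
    rw [heval]
    exact mul_ne_zero (pow_ne_zero _ hv0)
      (mul_ne_zero (mul_ne_zero (mul_ne_zero two_ne_zero hsC) (pow_ne_zero _ hcC)) hw0)
  have hκ0 : κ ≠ 0 := left_ne_zero_of_mul hne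
  have hrev : (revPoly (ψ (N + 1))).eval (v ^ 2) =
      (v ^ 2) ^ (N + 1) * (starRingEnd ℂ) ((ψ (N + 1)).eval (v ^ 2)) := by
    have hinv : (starRingEnd ℂ) (v ^ 2) * v ^ 2 = 1 := by
      rw [map_pow, ← mul_pow, mul_comm, hvv, one_pow]
    let _ : Invertible ((starRingEnd ℂ) (v ^ 2)) := ⟨v ^ 2, by rw [mul_comm, hinv], hinv⟩
    have e := Polynomial.eval₂_reverse_mul_pow (RingHom.id ℂ) ((starRingEnd ℂ) (v ^ 2))
      ((ψ (N + 1)).map (starRingEnd ℂ))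
    have hn : ((ψ (N + 1)).map (starRingEnd ℂ)).natDegree = N + 1 := by
      rw [Polynomial.natDegree_map, hnat]
    rw [hn] at e
    have e3 : ((ψ (N + 1)).map (starRingEnd ℂ)).eval ((starRingEnd ℂ) (v ^ 2)) =
        (starRingEnd ℂ) ((ψ (N + 1)).eval (v ^ 2)) := by
      rw [Polynomial.eval_map, Polynomial.eval₂_at_apply]
    change (revPoly (ψ (N + 1))).eval (v ^ 2) * _ = Polynomial.eval _ _ at e
    rw [e3] at e
    rw [← e, mul_comm, mul_assoc, ← mul_pow, hinv, one_pow, mul_one]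
  rw [hv2]
  refine ⟨right_ne_zero_of_mul hne, ?_⟩
  have ht : Real.tan ((Real.pi - α) / 4) * (1 + s) = c := by
    set y := (Real.pi - α) / 4 with hy
    have y1 : s = Real.cos (2 * y) := by
      rw [hsdef, ← Real.cos_pi_div_two_sub]; congr 1; rw [hy]; ring
    have y2 : c = Real.sin (2 * y) := by
      rw [hcdef, ← Real.sin_pi_div_two_sub]; congr 1; rw [hy]; ring
    have y3 : 0 < Real.cos y := Real.cos_pos_of_mem_Ioo ⟨by linarith, by linarith⟩
    rw [y1, y2, Real.tan_eq_sin_div_cos, Real.cos_two_mul, Real.sin_two_mul]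
    field_simp
    ring
  set t := Real.tan ((Real.pi - α) / 4)
  -- `tan ((π - α) / 4) = (1 - sin (α / 2)) / cos (α / 2)`
  have htc : t * c = 1 - s := by
    have : (1 + s) * (t * c - (1 - s)) = 0 := by linear_combination c * ht + h
    have := (mul_eq_zero.1 this).resolve_left (by linarith)
    linarith
  have htc' : (t : ℂ) * c = 1 - s := by exact_mod_cast htc
  have hI := Complex.I_sq
  have hwc : (starRingEnd ℂ) w = c - (1 - s) * Complex.I := by
    rw [hw]; simp; ring
  have hnum : Complex.I * β * v + 1 = s / c * (starRingEnd ℂ) w := by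
    rw [hwc, hβ, hvre]
    field_simp
    linear_combination (t * c * (c + s * Complex.I)) * hI - (c + s * Complex.I) * htc'
  have hden : Complex.I * β * (starRingEnd ℂ) v + 1 = s / c * w := by
    have : (starRingEnd ℂ) v = c - s * Complex.I := by rw [hvre]; simp; ring
    rw [this, hβ, hw]
    field_simp
    linear_combination (t * c * (c - s * Complex.I)) * hI - (c - s * Complex.I) * htc'
  rw [← hvc, hnum, hden, hrev, mul_div_mul_left _ _ (div_ne_zero hsC hcC)]
  have hconj : κ * (starRingEnd ℂ) ((ψ (N + 1)).eval (v ^ 2)) =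
      (starRingEnd ℂ) v ^ (N + 1) * (2 * s * c ^ N * (starRingEnd ℂ) w) := by
    have e := congrArg (starRingEnd ℂ) heval
    simp only [map_mul, map_pow, Complex.conj_ofReal, hκr] at e
    rw [e, map_ofNat]
  rw [div_eq_div_iff (right_ne_zero_of_mul hne) hw0]
  refine mul_left_cancel₀ hκ0 ?_
  have hvN : (v * (starRingEnd ℂ) v) ^ (N + 1) = 1 := by rw [hvv, one_pow]
  rw [mul_pow] at hvN
  linear_combination (v ^ 2) ^ (N + 1) * w * hconj - (starRingEnd ℂ) w * heval +
    v ^ (N + 1) * (2 * s * c ^ N * (starRingEnd ℂ) w * w) * hvN
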